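/- arXiv:2407.01827 — 5 statements merged into one kernel-verified Lean document; each statement's English description precedes it below -/
import Mathlib

section
/- Let a, b, c be real numbers with 0 ≤ c ≤ 1, and suppose D₃ ≥ 0 (so that P(x) = x³ + a x² + b x + c has three real roots counted with multiplicity). Then P has exactly 2 roots, counted with multiplicity, in the closed interval [−1, 1] if and only if (A < 0 and B ≤ 0) or (A ≥ 0 and B > 0) or (A > A_T and B = 0) or (A = 0 and B < B_T). -/
open Polynomial

/-!
Since `D₃ ≥ 0`, the monic cubic `P` splits, and its roots satisfy `P(1) P(-1) = ∏ (x² - 1)` and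
`|∏ x| = |c| ≤ 1`. If `±1` are not roots, `P(1) P(-1) > 0` says that an even number of roots lies in
`(-1, 1)`; they cannot all lie outside, as their product would exceed `1` in absolute value, so this
number is `2`. If one root is `±1`, exactly one of the other two, `p` and `q`, must lie in
`[-1, 1]`. Put `u = (1 - p)(1 - q)` and `v = (1 + p)(1 + q)`. As `|p q| ≤ 1`, the requirement is
`u v = (1 - p²)(1 - q²) < 0`, which amounts to `u < 0` or `v < 0` because
`u + v = 2 (1 + p q) ≥ 0`. For the root `-1` one has `P(1) = 2 u` and `4 (c + 1) = 2 (u + v)`, for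
the root `1` one has `P(-1) = -2 v` and `4 (c - 1) = -2 (u + v)`.
-/

section SignConditions

/-- The sign condition on `A = P(1)`, `B = P(-1)` and `c = P(0)` that detects whether a monic cubic
`P` with `|c| ≤ 1` and only real roots has exactly two of them in `[-1, 1]`. -/
def TwoRootCondition {R : Type*} [Ring R] [Preorder R] (A B c : R) : Prop :=
  (A < 0 ∧ B ≤ 0) ∨ (A ≥ 0 ∧ B > 0) ∨ (A > 4 * (c + 1) ∧ B = 0) ∨ (A = 0 ∧ B < 4 * (c - 1))

variable {R : Type*} [CommRing R] [LinearOrder R] [IsStrictOrderedRing R]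

theorem twoRootCondition_iff_mul_pos {A B c : R} (hA : A ≠ 0) (hB : B ≠ 0) :
    TwoRootCondition A B c ↔ 0 < A * B := by
  simp only [TwoRootCondition, hA, hB, mul_pos_iff, hB.le_iff_lt, ge_iff_le, hA.symm.le_iff_lt]
  tauto

theorem twoRootCondition_zero_right {A c : R} (hc : c ≤ 1) :
    TwoRootCondition A 0 c ↔ A < 0 ∨ 4 * (c + 1) < A := by
  have : ¬0 < 4 * (c - 1) := by linarith
  simp [TwoRootCondition, this]

theorem twoRootCondition_zero_left {B c : R} (hc : -1 ≤ c) :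
    TwoRootCondition 0 B c ↔ 0 < B ∨ B < 4 * (c - 1) := by
  have : ¬4 * (c + 1) < 0 := by linarith
  simp [TwoRootCondition, this]

theorem neg_or_neg_iff_mul_neg {u v : R} (h : 0 ≤ u + v) : u < 0 ∨ v < 0 ↔ u * v < 0 := by
  rw [mul_neg_iff]
  constructor
  · rintro (hu | hv)
    · exact .inr ⟨hu, by linarith⟩
    · exact .inl ⟨by linarith, hv⟩
  · tauto

end SignConditions

section CountingInMultisets

theorem prod_one_sub_mul_prod_neg_one_sub {R : Type*} [CommRing R] (s : Multiset R) :
    (s.map (1 - ·)).prod * (s.map (-1 - ·)).prod = (s.map (· ^ 2 - 1)).prod := by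
  rw [← Multiset.prod_map_mul]
  exact congrArg (fun f ↦ (s.map f).prod) (funext fun x ↦ by ring)

variable {R : Type*} [CommRing R] [LinearOrder R] [IsStrictOrderedRing R]

theorem prod_pos_iff_even_card_filter_neg {s : Multiset R} (hs : 0 ∉ s) :
    0 < s.prod ↔ Even (s.filter (· < 0)).card := by
  induction s using Multiset.induction_on with
  | empty => simp
  | cons x s ih =>
    obtain ⟨hx, hs⟩ : x ≠ 0 ∧ 0 ∉ s := by simpa [eq_comm] using hs
    have hprod : s.prod ≠ 0 := Multiset.prod_ne_zero hs
    rw [Multiset.prod_cons]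
    rcases hx.lt_or_gt with hx | hx
    · rw [Multiset.filter_cons_of_pos (p := (· < 0)) _ hx, Multiset.card_cons, Nat.even_add_one,
        ← ih hs, not_lt, hprod.le_iff_lt, mul_pos_iff]
      simp [hx, hx.not_gt]
    · rw [Multiset.filter_cons_of_neg (p := (· < 0)) _ hx.not_gt, ← ih hs,
        mul_pos_iff_of_pos_left hx]

theorem one_lt_abs_prod {s : Multiset R} (hs : s ≠ 0) (h : ∀ x ∈ s, 1 < |x|) : 1 < |s.prod| :=
  Multiset.prod_induction_nonempty (fun x ↦ 1 < |x|)
    (fun x y hx hy ↦ by rw [abs_mul]; exact one_lt_mul_of_lt_of_le hx hy.le) hs h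

theorem filter_Icc_ne_zero_of_abs_prod_le_one {s : Multiset R} (hs : s ≠ 0)
    (hprod : |s.prod| ≤ 1) :
    s.filter (· ∈ Set.Icc (-1) 1) ≠ 0 := by
  intro h
  refine (one_lt_abs_prod hs fun x hx ↦ ?_).not_ge hprod
  simpa [← abs_le] using Multiset.filter_eq_nil.mp h x hx

theorem prod_one_sub_mul_prod_neg_one_sub_pos_iff {s : Multiset R} (h₁ : 1 ∉ s) (h₂ : -1 ∉ s) :
    0 < (s.map (1 - ·)).prod * (s.map (-1 - ·)).prod ↔
      Even (s.filter (· ∈ Set.Icc (-1) 1)).card := by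
  have hsq : ∀ x ∈ s, x ^ 2 - 1 ≠ 0 := fun x hx h ↦ by
    rcases sq_eq_one_iff.mp (sub_eq_zero.mp h) with rfl | rfl <;> contradiction
  have hfilter : s.filter (· ^ 2 - 1 < 0) = s.filter (· ∈ Set.Icc (-1) 1) :=
    Multiset.filter_congr fun x hx ↦ by
      rw [← (hsq x hx).le_iff_lt, sub_nonpos, sq_le_one_iff_abs_le_one, abs_le, Set.mem_Icc]
  rw [prod_one_sub_mul_prod_neg_one_sub, prod_pos_iff_even_card_filter_neg (by simpa using hsq),
    Multiset.filter_map, Multiset.card_map, ← hfilter]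
  rfl

theorem card_filter_Icc_pair_eq_one_iff {p q : R} (hpq : |p * q| ≤ 1) :
    (({p, q} : Multiset R).filter (· ∈ Set.Icc (-1) 1)).card = 1 ↔
      (1 - p) * (1 - q) < 0 ∨ (1 + p) * (1 + q) < 0 := by
  have hcount : (({p, q} : Multiset R).filter (· ∈ Set.Icc (-1) 1)).card =
      (if |p| ≤ 1 then 1 else 0) + (if |q| ≤ 1 then 1 else 0) := by
    simp only [Multiset.insert_eq_cons, Multiset.filter_cons, Multiset.filter_singleton,
      Set.mem_Icc, ← abs_le]
    split_ifs <;> simp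
  have hsum : 0 ≤ (1 - p) * (1 - q) + (1 + p) * (1 + q) := by linarith [(abs_le.mp hpq).1]
  have hmul : (1 - p) * (1 - q) * ((1 + p) * (1 + q)) = (1 - p ^ 2) * (1 - q ^ 2) := by ring
  rw [hcount, neg_or_neg_iff_mul_neg hsum, hmul, mul_neg_iff]
  simp only [sub_pos, sub_neg, sq_lt_one_iff_abs_lt_one, one_lt_sq_iff_one_lt_abs]
  rw [abs_mul] at hpq
  have hp : 1 < |p| → |q| < 1 := fun hp ↦ by
    by_contra! hq
    exact (one_lt_mul_of_lt_of_le hp hq).not_ge hpq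
  have hq : 1 < |q| → |p| < 1 := fun hq ↦ by
    by_contra! hp
    exact (one_lt_mul_of_le_of_lt hp hq).not_ge hpq
  split_ifs <;> grind

theorem card_filter_Icc_eq_two_iff_of_notMem {s : Multiset R} (hs : s.card = 3)
    (hprod : |s.prod| ≤ 1) (h₁ : 1 ∉ s) (h₂ : -1 ∉ s) :
    (s.filter (· ∈ Set.Icc (-1) 1)).card = 2 ↔
      TwoRootCondition (s.map (1 - ·)).prod (s.map (-1 - ·)).prod (-s.prod) := by
  have hA : (s.map (1 - ·)).prod ≠ 0 := Multiset.prod_ne_zero (by simpa [sub_eq_zero] using h₁)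
  have hB : (s.map (-1 - ·)).prod ≠ 0 := Multiset.prod_ne_zero (by simpa [sub_eq_zero] using h₂)
  rw [twoRootCondition_iff_mul_pos hA hB, prod_one_sub_mul_prod_neg_one_sub_pos_iff h₁ h₂]
  have hpos : 0 < (s.filter (· ∈ Set.Icc (-1) 1)).card := Multiset.card_pos.mpr <|
    filter_Icc_ne_zero_of_abs_prod_le_one (Multiset.card_pos.mp (by lia)) hprod
  have hle := Multiset.card_le_card (s.filter_le (· ∈ Set.Icc (-1) 1))
  grind

theorem card_filter_Icc_eq_two_iff_of_one_mem {s : Multiset R} (hs : s.card = 3)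
    (hprod : |s.prod| ≤ 1) (h : 1 ∈ s) :
    (s.filter (· ∈ Set.Icc (-1) 1)).card = 2 ↔
      TwoRootCondition (s.map (1 - ·)).prod (s.map (-1 - ·)).prod (-s.prod) := by
  obtain ⟨t, rfl⟩ := Multiset.exists_cons_of_mem h
  obtain ⟨p, q, rfl⟩ := Multiset.card_eq_two.mp (Nat.succ_inj.mp (by simpa using hs))
  replace hprod : |p * q| ≤ 1 := by simpa using hprod
  have hA : ((1 ::ₘ {p, q}).map (1 - ·)).prod = 0 := by simp
  have hB : ((1 ::ₘ {p, q}).map (-1 - ·)).prod = -2 * ((1 + p) * (1 + q)) := by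
    simp only [Multiset.insert_eq_cons, Multiset.map_cons, Multiset.map_singleton,
      Multiset.prod_cons, Multiset.prod_singleton]
    ring
  have hc : (1 ::ₘ {p, q}).prod = p * q := by simp
  rw [hA, hB, hc, twoRootCondition_zero_left (by linarith [(abs_le.mp hprod).2]),
    Multiset.filter_cons_of_pos _ (by simp), Multiset.card_cons, Nat.succ_inj,
    card_filter_Icc_pair_eq_one_iff hprod, or_comm]
  refine or_congr ?_ ?_ <;> constructor <;> intro h <;> linarith

theorem card_filter_Icc_eq_two_iff_of_neg_one_mem {s : Multiset R} (hs : s.card = 3)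
    (hprod : |s.prod| ≤ 1) (h : -1 ∈ s) :
    (s.filter (· ∈ Set.Icc (-1) 1)).card = 2 ↔
      TwoRootCondition (s.map (1 - ·)).prod (s.map (-1 - ·)).prod (-s.prod) := by
  obtain ⟨t, rfl⟩ := Multiset.exists_cons_of_mem h
  obtain ⟨p, q, rfl⟩ := Multiset.card_eq_two.mp (Nat.succ_inj.mp (by simpa using hs))
  replace hprod : |p * q| ≤ 1 := by simpa using hprod
  have hA : ((-1 ::ₘ {p, q}).map (1 - ·)).prod = 2 * ((1 - p) * (1 - q)) := by
    simp only [Multiset.insert_eq_cons, Multiset.map_cons, Multiset.map_singleton,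
      Multiset.prod_cons, Multiset.prod_singleton]
    ring
  have hB : ((-1 ::ₘ {p, q}).map (-1 - ·)).prod = 0 := by simp
  have hc : -(-1 ::ₘ {p, q}).prod = p * q := by simp
  rw [hA, hB, hc, twoRootCondition_zero_right (abs_le.mp hprod).2,
    Multiset.filter_cons_of_pos _ (by simp), Multiset.card_cons, Nat.succ_inj,
    card_filter_Icc_pair_eq_one_iff hprod]
  refine or_congr ?_ ?_ <;> constructor <;> intro h <;> linarith

theorem card_filter_Icc_eq_two_iff {s : Multiset R} (hs : s.card = 3) (hprod : |s.prod| ≤ 1) :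
    (s.filter (· ∈ Set.Icc (-1) 1)).card = 2 ↔
      TwoRootCondition (s.map (1 - ·)).prod (s.map (-1 - ·)).prod (-s.prod) := by
  by_cases h₁ : 1 ∈ s
  · exact card_filter_Icc_eq_two_iff_of_one_mem hs hprod h₁
  by_cases h₂ : -1 ∈ s
  · exact card_filter_Icc_eq_two_iff_of_neg_one_mem hs hprod h₂
  exact card_filter_Icc_eq_two_iff_of_notMem hs hprod h₁ h₂

end CountingInMultisets

section RealClosed

theorem exists_real_isRoot_of_odd_natDegree {f : ℝ[X]} (hf : Odd f.natDegree) :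
    ∃ x, f.IsRoot x := by
  induction f using WfDvdMonoid.induction_on_irreducible with
  | zero => simp at hf
  | unit f hu => simp [natDegree_eq_zero_of_isUnit hu] at hf
  | mul f p hf0 hp ih =>
    rw [natDegree_mul hp.ne_zero hf0] at hf
    have hdeg : p.natDegree = 1 ∨ Odd f.natDegree := by
      have := hp.natDegree_le_two
      have := hp.natDegree_pos
      grind
    rcases hdeg with hp1 | hf1
    · obtain ⟨x, hx⟩ :=
        exists_root_of_degree_eq_one ((degree_eq_iff_natDegree_eq hp.ne_zero).mpr hp1)
      exact ⟨x, root_mul_right_of_isRoot f hx⟩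
    · obtain ⟨x, hx⟩ := ih hf1
      exact ⟨x, root_mul_left_of_isRoot p hx⟩

instance instIsRealClosedReal : IsRealClosed ℝ :=
  .of_linearOrderedField (fun hx ↦ ⟨_, (Real.mul_self_sqrt hx).symm⟩)
    exists_real_isRoot_of_odd_natDegree

end RealClosed

section Discriminant

theorem X_sub_C_mul_quadratic_eq_toPoly {R : Type*} [CommRing R] (x a u v : R) :
    (X - C x) * (C a * X ^ 2 + C u * X + C v) =
      Cubic.toPoly ⟨a, u - a * x, v - u * x, -(v * x)⟩ := by
  simp only [Cubic.toPoly, map_sub, map_mul, map_neg]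
  ring

theorem discr_eq_discrim_mul_sq {R : Type*} [CommRing R] (x a u v : R) :
    Cubic.discr ⟨a, u - a * x, v - u * x, -(v * x)⟩ =
      discrim a u v * (a * (x * x) + u * x + v) ^ 2 := by
  simp only [Cubic.discr, discrim]
  ring

variable {K : Type*} [Field K] [LinearOrder K] [IsStrictOrderedRing K] [IsRealClosed K]

theorem cubic_splits_of_discr_nonneg {P : Cubic K} (ha : P.a ≠ 0) (hP : 0 ≤ P.discr) :
    P.toPoly.Splits := by
  obtain ⟨x, hx⟩ : ∃ x, P.toPoly.IsRoot x :=
    IsRealClosed.exists_isRoot_of_odd_natDegree (by rw [Cubic.natDegree_of_a_ne_zero ha]; decide)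
  obtain ⟨a, u, v, rfl⟩ : ∃ a u v, P = ⟨a, u - a * x, v - u * x, -(v * x)⟩ := by
    have hx : P.a * x ^ 3 + P.b * x ^ 2 + P.c * x + P.d = 0 := by
      simpa [Cubic.toPoly] using hx
    refine ⟨P.a, P.b + P.a * x, P.c + (P.b + P.a * x) * x, Cubic.ext rfl ?_ ?_ ?_⟩
    · ring
    · ring
    · linear_combination hx
  have hroot : ∃ y, a * (y * y) + u * y + v = 0 := by
    by_cases hQ : a * (x * x) + u * x + v = 0
    · exact ⟨x, hQ⟩
    · rw [discr_eq_discrim_mul_sq] at hP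
      have hdiscrim : 0 ≤ discrim a u v := nonneg_of_mul_nonneg_left hP (by positivity)
      exact exists_quadratic_eq_zero ha (IsSquare.of_nonneg hdiscrim)
  obtain ⟨y, hy⟩ := hroot
  rw [← X_sub_C_mul_quadratic_eq_toPoly]
  refine (Splits.X_sub_C x).mul (Splits.of_natDegree_eq_two (natDegree_quadratic ha) (x := y) ?_)
  simpa [sq] using hy

end Discriminant

theorem cubic_two_roots_in_Icc_of_c_between_zero_one_general {K : Type*} [Field K] [LinearOrder K]
    [IsStrictOrderedRing K] [IsRealClosed K] (a b c : K) (hc : |c| ≤ 1)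
    (hD : 0 ≤ -27 * c ^ 2 + (18 * a * b - 4 * a ^ 3) * c + a ^ 2 * b ^ 2 - 4 * b ^ 3) :
    ((X ^ 3 + C a * X ^ 2 + C b * X + C c : K[X]).roots.filter (· ∈ Set.Icc (-1) 1)).card = 2 ↔
      TwoRootCondition (a + b + c + 1) (a - b + c - 1) c := by
  set P : Cubic K := ⟨1, a, b, c⟩ with hP
  have hpoly : X ^ 3 + C a * X ^ 2 + C b * X + C c = P.toPoly := by simp [Cubic.toPoly, hP]
  have hmonic : P.toPoly.Monic := Cubic.monic_of_a_eq_one rfl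
  have hdeg : P.toPoly.natDegree = 3 := Cubic.natDegree_of_a_ne_zero one_ne_zero
  have hsplits : P.toPoly.Splits := cubic_splits_of_discr_nonneg one_ne_zero <|
    hD.trans_eq <| by simp only [Cubic.discr, hP]; ring
  have hA : (P.toPoly.roots.map (1 - ·)).prod = a + b + c + 1 := by
    rw [← hsplits.eval_eq_prod_roots_of_monic hmonic, ← hpoly]
    simp only [eval_add, eval_mul, eval_pow, eval_X, eval_C]
    ring
  have hB : (P.toPoly.roots.map (-1 - ·)).prod = a - b + c - 1 := by
    rw [← hsplits.eval_eq_prod_roots_of_monic hmonic, ← hpoly]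
    simp only [eval_add, eval_mul, eval_pow, eval_X, eval_C]
    ring
  have hprod : -P.toPoly.roots.prod = c := by
    simpa [hdeg, hP, pow_succ] using (hsplits.coeff_zero_eq_prod_roots_of_monic hmonic).symm
  rw [hpoly, card_filter_Icc_eq_two_iff (hsplits.natDegree_eq_card_roots.symm.trans hdeg)
    (by rwa [← abs_neg, hprod]), hA, hB, hprod]

/-- For `0 ≤ c ≤ 1` and `D₃ ≥ 0`, the cubic `x³ + a x² + b x + c` has exactly 2 roots
(with multiplicity) in `[-1, 1]` iff the stated sign conditions on
`A = a+b+c+1`, `B = a-b+c-1`, `A_T = 4(c+1)`, `B_T = 4(c-1)` hold. -/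
theorem cubic_two_roots_in_Icc_of_c_between_zero_one (a b c : ℝ)
    (hc0 : 0 ≤ c) (hc1 : c ≤ 1)
    (hD : -27*c^2 + (18*a*b - 4*a^3)*c + a^2*b^2 - 4*b^3 ≥ 0) :
    Multiset.card (((X^3 + C a * X^2 + C b * X + C c : ℝ[X]).roots).filter
        (fun x => x ∈ Set.Icc (-1 : ℝ) 1)) = 2 ↔
      ((a+b+c+1 < 0 ∧ a-b+c-1 ≤ 0) ∨
       (a+b+c+1 ≥ 0 ∧ a-b+c-1 > 0) ∨
       (a+b+c+1 > 4*(c+1) ∧ a-b+c-1 = 0) ∨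
       (a+b+c+1 = 0 ∧ a-b+c-1 < 4*(c-1))) :=
  cubic_two_roots_in_Icc_of_c_between_zero_one_general a b c
    (abs_le.mpr ⟨by linarith, hc1⟩) hD
end

section
/- Let a, b, c be real numbers with c > 1, and suppose D₃ ≥ 0 (so that P(x) = x³ + a x² + b x + c has three real roots counted with multiplicity). Then P has exactly 2 roots, counted with multiplicity, in the closed interval [−1, 1] if and only if (A ≤ 0 and B ≤ 0) or (A ≥ 0 and B ≥ 0 and E ≥ 0). -/
open Polynomial

/-!
Since `D₃ ≥ 0`, the cubic has three real roots; their product is `-c < -1`, so one of them, `z`,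
lies outside `[-1, 1]`, and the question is when the other two, `x` and `y`, lie inside. In terms
of the roots, `A = (1 - x)(1 - y)(1 - z)`, `B = -(1 + x)(1 + y)(1 + z)` and
`E = (1 - xy)(1 - yz)(1 - zx)`. Two numbers `x`, `y` lie in `[-1, 1]` if and only if
`(1 - x)(1 - y) ≥ 0`, `(1 + x)(1 + y) ≥ 0` and `xy ≤ 1`. The signs of `A` and `B` give the first two
conditions. The third is automatic if `z > 1`, because then `xy < 0`, and is given by the sign of
`E` if `z < -1`. The identities
`(1 - yz)(1 - zx) = (1 - z)(1 - xyz) + z(1 - x)(1 - y) = (1 + z)(1 + xyz) - z(1 + x)(1 + y)`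
control the remaining factors of `E`.
-/

section RealRoots

theorem exists_isRoot_of_natDegree_eq_three {p : ℝ[X]} (hp : p.natDegree = 3) :
    ∃ r, p.IsRoot r := by
  have not_irreducible : ¬Irreducible p := fun h => by
    have := natDegree_le_of_degree_le h.degree_le_two
    lia
  rw [irreducible_iff_roots_eq_zero_of_degree_le_three (by lia) hp.le] at not_irreducible
  obtain ⟨r, hr⟩ := Multiset.exists_mem_of_ne_zero not_irreducible
  exact ⟨r, isRoot_of_mem_roots hr⟩

theorem splits_quadratic_of_discrim_nonneg {a b c : ℝ} (ha : a ≠ 0) (h : 0 ≤ discrim a b c) :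
    (C a * X ^ 2 + C b * X + C c).Splits := by
  obtain ⟨x, hx⟩ := exists_quadratic_eq_zero ha ⟨_, (Real.mul_self_sqrt h).symm⟩
  refine Splits.of_degree_eq_two (x := x) (degree_quadratic ha) ?_
  simpa [pow_two] using hx

-- `⟨a, b - a * r, c - b * r, -(c * r)⟩` is the cubic `(X - r) * (a * X ^ 2 + b * X + c)`.
theorem discr_linear_mul_quadratic {R : Type*} [CommRing R] (r a b c : R) :
    Cubic.discr ⟨a, b - a * r, c - b * r, -(c * r)⟩ =
      discrim a b c * (a * (r * r) + b * r + c) ^ 2 := by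
  simp only [Cubic.discr, discrim]
  ring

theorem discrim_nonneg_of_discr_linear_mul_quadratic_nonneg {r a b c : ℝ}
    (h : 0 ≤ Cubic.discr ⟨a, b - a * r, c - b * r, -(c * r)⟩) : 0 ≤ discrim a b c := by
  by_contra! discrim_neg
  have eval_ne_zero : a * (r * r) + b * r + c ≠ 0 :=
    quadratic_ne_zero_of_discrim_ne_sq
      (fun s => (discrim_neg.trans_le (sq_nonneg s)).ne) r
  rw [discr_linear_mul_quadratic] at h
  exact h.not_gt (mul_neg_of_neg_of_pos discrim_neg (sq_pos_of_ne_zero eval_ne_zero))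

theorem cubic_eq_linear_mul_quadratic_of_isRoot {R : Type*} [CommRing R] {P : Cubic R} {r : R}
    (hr : P.toPoly.IsRoot r) :
    ∃ b c, P = ⟨P.a, b - P.a * r, c - b * r, -(c * r)⟩ := by
  have eval_eq_zero : P.a * r ^ 3 + P.b * r ^ 2 + P.c * r + P.d = 0 := by
    simpa [Cubic.toPoly] using hr
  refine ⟨P.b + P.a * r, P.c + (P.b + P.a * r) * r, ?_⟩
  ext
  · rfl
  · ring
  · ring
  · linear_combination eval_eq_zero

theorem splits_toPoly_of_discr_nonneg {P : Cubic ℝ} (ha : P.a ≠ 0) (h : 0 ≤ P.discr) :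
    P.toPoly.Splits := by
  obtain ⟨r, hr⟩ := exists_isRoot_of_natDegree_eq_three (Cubic.natDegree_of_a_ne_zero ha)
  obtain ⟨b, c, hP⟩ := cubic_eq_linear_mul_quadratic_of_isRoot hr
  have factorization : P.toPoly = (X - C r) * (C P.a * X ^ 2 + C b * X + C c) := by
    rw [hP]
    simp only [Cubic.toPoly, map_sub, map_mul, map_neg]
    ring
  rw [hP] at h
  rw [factorization]
  exact (Splits.X_sub_C r).mul <|
    splits_quadratic_of_discrim_nonneg ha (discrim_nonneg_of_discr_linear_mul_quadratic_nonneg h)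

end RealRoots

section OuterRoot

theorem exists_mem_one_lt_abs_of_one_lt_abs_prod {R : Type*} [CommRing R] [LinearOrder R]
    [IsStrictOrderedRing R] {s : Multiset R} (h : 1 < |s.prod|) : ∃ z ∈ s, 1 < |z| := by
  contrapose! h
  induction s using Multiset.induction with
  | empty => simp
  | cons z s ih =>
    rw [Multiset.forall_mem_cons] at h
    rw [Multiset.prod_cons, abs_mul]
    exact mul_le_one₀ h.1 (abs_nonneg _) (ih h.2)

theorem exists_mem_roots_one_lt_abs {K : Type*} [Field K] [LinearOrder K] [IsStrictOrderedRing K]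
    {p : K[X]} (hp : p.Splits) (h : |p.leadingCoeff| < |p.coeff 0|) : ∃ z ∈ p.roots, 1 < |z| := by
  apply exists_mem_one_lt_abs_of_one_lt_abs_prod
  rw [hp.coeff_zero_eq_leadingCoeff_mul_prod_roots, abs_mul, abs_mul, abs_pow, abs_neg, abs_one,
    one_pow, one_mul] at h
  by_contra! hprod
  exact h.not_ge (mul_le_of_le_one_right (abs_nonneg _) hprod)

theorem exists_roots_eq_of_abs_a_lt_abs_d {K : Type*} [Field K] [LinearOrder K]
    [IsStrictOrderedRing K] {P : Cubic K} (ha : P.a ≠ 0) (hP : P.toPoly.Splits)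
    (had : |P.a| < |P.d|) : ∃ z x y, 1 < |z| ∧ P.roots = {z, x, y} := by
  have card_roots : P.roots.card = 3 :=
    hP.natDegree_eq_card_roots.symm.trans (Cubic.natDegree_of_a_ne_zero ha)
  obtain ⟨z, hz, one_lt_abs_z⟩ : ∃ z ∈ P.roots, 1 < |z| :=
    exists_mem_roots_one_lt_abs hP (by rwa [Cubic.leadingCoeff_of_a_ne_zero ha, Cubic.coeff_eq_d])
  obtain ⟨s, hs⟩ := Multiset.exists_cons_of_mem hz
  obtain ⟨x, y, rfl⟩ : ∃ x y, s = {x, y} := by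
    rw [← Multiset.card_eq_two]
    simpa [hs] using card_roots
  exact ⟨z, x, y, one_lt_abs_z, hs⟩

end OuterRoot

section UnitInterval

variable {R : Type*} [CommRing R] [LinearOrder R] [IsStrictOrderedRing R] {x y z : R}

theorem le_one_of_one_sub_mul_one_sub_nonneg (h : 0 ≤ (1 - x) * (1 - y)) (hxy : x * y ≤ 1) :
    x ≤ 1 := by
  by_contra! hx
  have hy : 1 ≤ y := sub_nonpos.mp (nonpos_of_mul_nonneg_right h (sub_neg.mpr hx))
  exact hxy.not_gt (one_lt_mul_of_lt_of_le hx hy)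

theorem mem_Icc_neg_one_one_of_mul_le_one (h_one : 0 ≤ (1 - x) * (1 - y))
    (h_neg_one : 0 ≤ (1 + x) * (1 + y)) (hxy : x * y ≤ 1) : x ∈ Set.Icc (-1) 1 := by
  have neg_le_one : -x ≤ 1 :=
    le_one_of_one_sub_mul_one_sub_nonneg (y := -y) (by simpa using h_neg_one) (by simpa using hxy)
  exact ⟨neg_le.mp neg_le_one, le_one_of_one_sub_mul_one_sub_nonneg h_one hxy⟩

theorem mem_Icc_neg_one_one_and_iff :
    x ∈ Set.Icc (-1) 1 ∧ y ∈ Set.Icc (-1) 1 ↔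
      0 ≤ (1 - x) * (1 - y) ∧ 0 ≤ (1 + x) * (1 + y) ∧ x * y ≤ 1 := by
  constructor
  · rintro ⟨hx, hy⟩
    refine ⟨mul_nonneg (sub_nonneg.mpr hx.2) (sub_nonneg.mpr hy.2),
      mul_nonneg (neg_le_iff_add_nonneg'.mp hx.1) (neg_le_iff_add_nonneg'.mp hy.1), ?_⟩
    calc x * y ≤ |x| * |y| := (le_abs_self _).trans_eq (abs_mul x y)
      _ ≤ 1 := mul_le_one₀ (abs_le.mpr hx) (abs_nonneg y) (abs_le.mpr hy)
  · rintro ⟨h_one, h_neg_one, hxy⟩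
    refine ⟨mem_Icc_neg_one_one_of_mul_le_one h_one h_neg_one hxy,
      mem_Icc_neg_one_one_of_mul_le_one (y := x) ?_ ?_ ?_⟩ <;> rwa [mul_comm]

theorem mem_Icc_neg_one_one_and_iff_of_one_lt (hz : 1 < z) (hxyz : x * y * z < -1) :
    x ∈ Set.Icc (-1) 1 ∧ y ∈ Set.Icc (-1) 1 ↔
      (1 - x) * (1 - y) * (1 - z) ≤ 0 ∧ 0 ≤ (1 + x) * (1 + y) * (1 + z) := by
  have hxy : x * y < 0 := neg_of_mul_neg_left (by linarith) (by linarith : 0 ≤ z)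
  rw [mem_Icc_neg_one_one_and_iff, mul_nonneg_iff_of_pos_right (by linarith : 0 < 1 + z),
    ← neg_nonneg, ← mul_neg, mul_nonneg_iff_of_pos_right (by linarith : 0 < -(1 - z))]
  simp only [hxy.le.trans zero_le_one, and_true]

theorem mem_Icc_neg_one_one_and_iff_of_lt_neg_one (hz : z < -1) (hxyz : x * y * z < -1) :
    x ∈ Set.Icc (-1) 1 ∧ y ∈ Set.Icc (-1) 1 ↔
      0 ≤ (1 - x) * (1 - y) * (1 - z) ∧ (1 + x) * (1 + y) * (1 + z) ≤ 0 ∧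
        0 ≤ (1 - x * y) * (1 - y * z) * (1 - z * x) := by
  rw [mem_Icc_neg_one_one_and_iff, mul_nonneg_iff_of_pos_right (by linarith : 0 < 1 - z),
    ← neg_nonneg (a := _ * (1 + z)), ← mul_neg,
    mul_nonneg_iff_of_pos_right (by linarith : 0 < -(1 + z))]
  refine and_congr_right fun _ => and_congr_right fun h_neg_one => ?_
  have cofactor_pos : 0 < (1 - y * z) * (1 - z * x) :=
    calc 0 < (1 + z) * (1 + x * y * z) := mul_pos_of_neg_of_neg (by linarith) (by linarith)
      _ ≤ (1 + z) * (1 + x * y * z) + -z * ((1 + x) * (1 + y)) :=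
        le_add_of_nonneg_right (mul_nonneg (by linarith) h_neg_one)
      _ = (1 - y * z) * (1 - z * x) := by ring
  rw [mul_assoc (1 - x * y), mul_nonneg_iff_of_pos_right cofactor_pos, sub_nonneg]

theorem mul_one_sub_mul_neg_of_one_lt (hz : 1 < z) (hxyz : x * y * z < -1)
    (h : 0 ≤ (1 - x) * (1 - y) * (1 - z)) : (1 - x * y) * (1 - y * z) * (1 - z * x) < 0 := by
  have hxy : x * y < 0 := neg_of_mul_neg_left (by linarith) (by linarith : 0 ≤ z)
  have h_one : (1 - x) * (1 - y) ≤ 0 := nonpos_of_mul_nonneg_left h (by linarith)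
  have cofactor_neg : (1 - y * z) * (1 - z * x) < 0 :=
    calc (1 - y * z) * (1 - z * x)
        = (1 - z) * (1 - x * y * z) + z * ((1 - x) * (1 - y)) := by ring
      _ ≤ (1 - z) * (1 - x * y * z) :=
        add_le_of_nonpos_right (mul_nonpos_of_nonneg_of_nonpos (by linarith) h_one)
      _ < 0 := mul_neg_of_neg_of_pos (by linarith) (by linarith)
  rw [mul_assoc]
  exact mul_neg_of_pos_of_neg (by linarith) cofactor_neg

theorem mul_one_add_neg_of_lt_neg_one (hz : z < -1) (hxyz : x * y * z < -1)
    (h : (1 - x) * (1 - y) * (1 - z) ≤ 0) : (1 + x) * (1 + y) * (1 + z) < 0 := by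
  have hxy : 0 < x * y := pos_of_mul_neg_left (by linarith) (by linarith : z ≤ 0)
  have h_one : (1 - x) * (1 - y) ≤ 0 := nonpos_of_mul_nonpos_left h (by linarith)
  exact mul_neg_of_pos_of_neg (by linarith) (by linarith)

theorem mem_Icc_neg_one_one_and_iff_of_one_lt_abs (hz : 1 < |z|) (hxyz : x * y * z < -1) :
    x ∈ Set.Icc (-1) 1 ∧ y ∈ Set.Icc (-1) 1 ↔
      ((1 - x) * (1 - y) * (1 - z) ≤ 0 ∧ 0 ≤ (1 + x) * (1 + y) * (1 + z)) ∨
        (0 ≤ (1 - x) * (1 - y) * (1 - z) ∧ (1 + x) * (1 + y) * (1 + z) ≤ 0 ∧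
          0 ≤ (1 - x * y) * (1 - y * z) * (1 - z * x)) := by
  rcases lt_abs.mp hz with one_lt_z | one_lt_neg_z
  · rw [mem_Icc_neg_one_one_and_iff_of_one_lt one_lt_z hxyz, iff_self_or]
    rintro ⟨hA, -, hE⟩
    exact absurd hE (mul_one_sub_mul_neg_of_one_lt one_lt_z hxyz hA).not_ge
  · have z_lt_neg_one : z < -1 := lt_neg.mp one_lt_neg_z
    rw [mem_Icc_neg_one_one_and_iff_of_lt_neg_one z_lt_neg_one hxyz, iff_or_self]
    rintro ⟨hA, hB⟩
    exact absurd hB (mul_one_add_neg_of_lt_neg_one z_lt_neg_one hxyz hA).not_ge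

end UnitInterval

theorem card_filter_eq_two_iff_of_not {α : Type*} {p : α → Prop} [DecidablePred p] {x y z : α}
    (hz : ¬p z) : (({z, x, y} : Multiset α).filter p).card = 2 ↔ p x ∧ p y := by
  by_cases hx : p x <;> by_cases hy : p y <;>
    simp [Multiset.insert_eq_cons, Multiset.filter_singleton, hx, hy, hz]

/-- For `c > 1` and `D₃ ≥ 0`, the cubic `x³ + a x² + b x + c` has exactly 2 roots
(with multiplicity) in `[-1, 1]` iff `(A ≤ 0 ∧ B ≤ 0) ∨ (A ≥ 0 ∧ B ≥ 0 ∧ E ≥ 0)`,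
where `A = a+b+c+1`, `B = a-b+c-1`, `E = (a-c)c - b + 1`. -/
theorem cubic_two_roots_in_Icc_of_one_lt_c (a b c : ℝ) (hc : c > 1)
    (hD : -27*c^2 + (18*a*b - 4*a^3)*c + a^2*b^2 - 4*b^3 ≥ 0) :
    Multiset.card (((X^3 + C a * X^2 + C b * X + C c : ℝ[X]).roots).filter
        (fun x => x ∈ Set.Icc (-1 : ℝ) 1)) = 2 ↔
      ((a+b+c+1 ≤ 0 ∧ a-b+c-1 ≤ 0) ∨
       (a+b+c+1 ≥ 0 ∧ a-b+c-1 ≥ 0 ∧ (a - c)*c - b + 1 ≥ 0)) := by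
  let P : Cubic ℝ := ⟨1, a, b, c⟩
  have discr_nonneg : 0 ≤ P.discr := hD.trans_eq (by simp only [P, Cubic.discr]; ring)
  obtain ⟨z, x, y, one_lt_abs_z, hroots⟩ := exists_roots_eq_of_abs_a_lt_abs_d
    (P := P) one_ne_zero (splits_toPoly_of_discr_nonneg one_ne_zero discr_nonneg)
    (by simpa [P] using lt_abs.mpr (.inl hc))
  obtain ⟨ha, hb, hc'⟩ : a = -(z + x + y) ∧ b = z * x + z * y + x * y ∧ c = -(z * x * y) := by
    simpa [P, Cubic.map] using
      Cubic.eq_sum_three_roots (P := P) (φ := RingHom.id ℝ) one_ne_zero hroots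
  have hA : a + b + c + 1 = (1 - x) * (1 - y) * (1 - z) := by rw [ha, hb, hc']; ring
  have hB : a - b + c - 1 = -((1 + x) * (1 + y) * (1 + z)) := by rw [ha, hb, hc']; ring
  have hE : (a - c) * c - b + 1 = (1 - x * y) * (1 - y * z) * (1 - z * x) := by
    rw [ha, hb, hc']; ring
  have toPoly_eq : X ^ 3 + C a * X ^ 2 + C b * X + C c = P.toPoly := by simp [P, Cubic.toPoly]
  have z_notMem : z ∉ Set.Icc (-1 : ℝ) 1 := fun hz => one_lt_abs_z.not_ge (abs_le.mpr hz)
  rw [hA, hB, hE, neg_nonpos, ge_iff_le, ge_iff_le, ge_iff_le, neg_nonneg, toPoly_eq,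
    ← Cubic.roots, hroots, card_filter_eq_two_iff_of_not z_notMem]
  exact mem_Icc_neg_one_one_and_iff_of_one_lt_abs one_lt_abs_z (by linarith)
end

section
/- Let a, b, c be real numbers with c > 0, suppose P(1) = 0 (i.e. A = 0) and D₃ = 0. Then P(x) = (x − 1)²(x + c), i.e. a = c − 2 and b = 1 − 2c, and consequently B = B_T = 4(c − 1). In particular, for c > 0 the plane A = 0 meets the discriminant surface D₃ = 0 only along this tangency line. -/
open Polynomial

/-!
If a cubic `P` has a root `r`, then `P = (X - r) Q` with `Q` quadratic, and the discriminant
factors as `disc P = disc Q * Q(r) ^ 2`, where `Q(r) = P'(r)`. So if `disc P = 0` while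
`disc Q ≠ 0`, then `r` is a double root and `P` is determined by `r` and its two leading
coefficients. For `r = 1` and `P = X³ + a X² + b X + c` the quotient is `Q = X² + (a + 1) X - c`,
whose discriminant `(a + 1)² + 4 c` is positive when `c > 0`.
-/

section Cubic

variable {R : Type*} [CommRing R] {P : Cubic R} {r : R}

theorem cubic_isRoot_iff : P.toPoly.IsRoot r ↔ P.a * r ^ 3 + P.b * r ^ 2 + P.c * r + P.d = 0 := by
  simp [IsRoot.def, Cubic.toPoly]

theorem cubic_eval_derivative :
    P.toPoly.derivative.eval r = 3 * P.a * r ^ 2 + 2 * P.b * r + P.c := by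
  simp only [Cubic.toPoly, derivative_add, derivative_C_mul, derivative_X_pow, derivative_X,
    derivative_C, eval_add, eval_mul, eval_pow, eval_C, eval_X, eval_one, eval_zero]
  push_cast
  ring

-- The coefficients of the quotient by `X - r` are given by Horner's scheme.
theorem cubic_discr_eq_discrim_mul_sq_of_isRoot (hr : P.toPoly.IsRoot r) :
    P.discr = discrim P.a (P.a * r + P.b) ((P.a * r + P.b) * r + P.c) *
      P.toPoly.derivative.eval r ^ 2 := by
  have hd : P.d = -(P.a * r ^ 3 + P.b * r ^ 2 + P.c * r) :=
    eq_neg_of_add_eq_zero_right (cubic_isRoot_iff.mp hr)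
  rw [cubic_eval_derivative, Cubic.discr, discrim, hd]
  ring

theorem cubic_isRoot_derivative_of_discr_eq_zero [IsDomain R] (hr : P.toPoly.IsRoot r)
    (hP : P.discr = 0) (hQ : discrim P.a (P.a * r + P.b) ((P.a * r + P.b) * r + P.c) ≠ 0) :
    P.toPoly.derivative.IsRoot r := by
  rw [cubic_discr_eq_discrim_mul_sq_of_isRoot hr] at hP
  exact eq_zero_of_pow_eq_zero ((mul_eq_zero_iff_left hQ).mp hP)

theorem cubic_toPoly_eq_X_sub_C_sq_mul (hr : P.toPoly.IsRoot r)
    (hr' : P.toPoly.derivative.IsRoot r) :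
    P.toPoly = (X - C r) ^ 2 * (C P.a * X + C (P.b + 2 * P.a * r)) := by
  have hc : P.c = -(3 * P.a * r ^ 2 + 2 * P.b * r) :=
    eq_neg_of_add_eq_zero_right (cubic_eval_derivative.symm.trans hr')
  have hd : P.d = 2 * P.a * r ^ 3 + P.b * r ^ 2 := by
    linear_combination cubic_isRoot_iff.mp hr - r * hc
  simp only [Cubic.toPoly, hc, hd, C_neg, C_add, C_mul, C_pow, C_ofNat]
  ring

end Cubic

theorem A_eq_zero_and_D3_eq_zero_tangency_general {R : Type*} [CommRing R] [IsDomain R]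
    (a b c : R) (hQ : discrim 1 (a + 1) (-c) ≠ 0) (hA : a + b + c + 1 = 0)
    (hD : -27 * c ^ 2 + (18 * a * b - 4 * a ^ 3) * c + a ^ 2 * b ^ 2 - 4 * b ^ 3 = 0) :
    (X ^ 3 + C a * X ^ 2 + C b * X + C c : R[X]) = (X - 1) ^ 2 * (X + C c) ∧
      a = c - 2 ∧ b = 1 - 2 * c ∧ a - b + c - 1 = 4 * (c - 1) := by
  let P : Cubic R := ⟨1, a, b, c⟩
  have hroot : P.toPoly.IsRoot 1 := cubic_isRoot_iff.mpr (by linear_combination hA)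
  have hdiscr : P.discr = 0 := by
    rw [Cubic.discr]
    linear_combination hD
  have hquot : discrim P.a (P.a * 1 + P.b) ((P.a * 1 + P.b) * 1 + P.c) ≠ 0 := by
    convert hQ using 2
    · ring
    · linear_combination hA
  have hroot' : P.toPoly.derivative.IsRoot 1 :=
    cubic_isRoot_derivative_of_discr_eq_zero hroot hdiscr hquot
  have hderiv : 3 * 1 * 1 ^ 2 + 2 * a * 1 + b = 0 := cubic_eval_derivative.symm.trans hroot'
  have ha : a = c - 2 := by linear_combination hderiv - hA
  have hb : b = 1 - 2 * c := by linear_combination hA - ha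
  refine ⟨?_, ha, hb, by linear_combination ha - hb⟩
  have hfactor := cubic_toPoly_eq_X_sub_C_sq_mul hroot hroot'
  have hc : a + 2 * 1 * 1 = c := by linear_combination ha
  simpa only [P, Cubic.toPoly, hc, C_1, one_mul] using hfactor

/-- For `c > 0`, if `P(1) = 0` (i.e. `A = 0`) and `D₃ = 0`, then `P = (x-1)²(x+c)`,
i.e. `a = c - 2` and `b = 1 - 2c`, and consequently `B = B_T = 4(c-1)`. -/
theorem A_eq_zero_and_D3_eq_zero_tangency (a b c : ℝ) (hc : 0 < c)
    (hA : a + b + c + 1 = 0)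
    (hD : -27*c^2 + (18*a*b - 4*a^3)*c + a^2*b^2 - 4*b^3 = 0) :
    (X^3 + C a * X^2 + C b * X + C c : ℝ[X]) = (X - 1)^2 * (X + C c) ∧
      a = c - 2 ∧ b = 1 - 2*c ∧ a - b + c - 1 = 4*(c-1) := by
  have hQ : 0 < discrim 1 (a + 1) (-c) := by rw [discrim]; linarith [sq_nonneg (a + 1)]
  exact A_eq_zero_and_D3_eq_zero_tangency_general a b c hQ.ne' hA hD
end

section
/- Let a, b be real numbers with a² − 4b ≥ 0, and let q(x) = x² + a x + b. Then q has exactly one root, counted with multiplicity, in the closed interval [−1, 1] if and only if (q(1) < 0 and q(−1) ≥ 0) or (q(1) ≥ 0 and q(−1) < 0) or (q(1) > 4 and q(−1) = 0) or (q(1) = 0 and q(−1) > 4). (This is the case c = 0 of the cubic problem, since x³ + a x² + b x = x·q(x) has the root 0 in [−1, 1].) -/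
open Polynomial

/-!
If `q = (x - r) (x - s)` with `r ≤ s`, then exactly one root lies in `[l, u]` when either only `r`
does, so that `l ≤ r ≤ u < s`, or only `s` does, so that `r < l ≤ s ≤ u`; the reflection `x ↦ -x`
exchanges the two cases. In the first case `q u < 0 ≤ q l`, unless `r = u`; then `q u = 0` and
`q l = (u - l) (s - l)`, which exceeds `(u - l) ^ 2` exactly when `u < s`.
If `q` has negative discriminant, it has no root and is positive at both endpoints.
-/

theorem card_filter_pair_eq_one_iff {α : Type*} (p : α → Prop) [DecidablePred p] (x y : α) :
    (Multiset.filter p {x, y}).card = 1 ↔ Xor (p x) (p y) := by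
  by_cases hx : p x <;> by_cases hy : p y <;>
    simp [Multiset.insert_eq_cons, Multiset.filter_singleton, hx, hy]

theorem xor_mem_Icc_iff_of_le {α : Type*} [LinearOrder α] {l u r s : α} (hrs : r ≤ s) :
    Xor (r ∈ Set.Icc l u) (s ∈ Set.Icc l u) ↔
      (l ≤ r ∧ r ≤ u ∧ u < s) ∨ (r < l ∧ l ≤ s ∧ s ≤ u) := by
  simp only [Xor, Set.mem_Icc]
  grind

theorem roots_monic_quadratic_eq_pair {R : Type*} [CommRing R] [IsDomain R] (r s : R) :
    (X ^ 2 + C (-(r + s)) * X + C (r * s)).roots = {r, s} := by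
  have vieta := (roots_quadratic_eq_pair_iff_of_ne_zero (one_ne_zero' R)
    (b := -(r + s)) (c := r * s) (x1 := r) (x2 := s)).mpr ⟨by ring, by ring⟩
  rwa [C_1, one_mul] at vieta

section OrderedField

variable {K : Type*} [Field K] [LinearOrder K] [IsStrictOrderedRing K] {a b l u r s : K}

theorem exists_le_eq_neg_add_eq_mul_of_isSquare (h : IsSquare (a ^ 2 - 4 * b)) :
    ∃ r s : K, r ≤ s ∧ a = -(r + s) ∧ b = r * s := by
  obtain ⟨d, hd⟩ := h
  have hd_abs : |d| * |d| = a ^ 2 - 4 * b := by rw [abs_mul_abs_self, hd]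
  exact ⟨(-a - |d|) / 2, (-a + |d|) / 2, by linarith [abs_nonneg d], by ring,
    by linear_combination hd_abs / 4⟩

theorem quadratic_pos_of_discrim_neg (h : a ^ 2 - 4 * b < 0) (x : K) : 0 < x ^ 2 + a * x + b := by
  linarith [sq_nonneg (2 * x + a)]

theorem roots_quadratic_eq_zero_of_discrim_neg (h : a ^ 2 - 4 * b < 0) :
    (X ^ 2 + C a * X + C b).roots = 0 := by
  refine Multiset.eq_zero_of_forall_notMem fun x hx ↦ (quadratic_pos_of_discrim_neg h x).ne' ?_
  simpa using (mem_roots'.mp hx).2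

theorem sq_sub_lt_mul_sub_sub_iff (hlu : l < u) : (u - l) ^ 2 < (l - u) * (l - s) ↔ u < s := by
  rw [show (l - u) * (l - s) = (u - l) * (s - l) by ring, sq,
    mul_lt_mul_iff_right₀ (sub_pos.mpr hlu), sub_lt_sub_iff_right]

theorem le_and_le_and_lt_iff_mul_sub_sub (hlu : l < u) (hrs : r ≤ s) :
    l ≤ r ∧ r ≤ u ∧ u < s ↔
      ((u - r) * (u - s) < 0 ∧ 0 ≤ (l - r) * (l - s)) ∨
      ((u - r) * (u - s) = 0 ∧ (u - l) ^ 2 < (l - r) * (l - s)) := by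
  constructor
  · rintro ⟨hlr, hru, hus⟩
    rcases hru.lt_or_eq with hru | rfl
    · exact .inl ⟨mul_neg_of_pos_of_neg (sub_pos.mpr hru) (sub_neg.mpr hus),
        mul_nonneg_of_nonpos_of_nonpos (by linarith) (by linarith)⟩
    · exact .inr ⟨by ring, (sq_sub_lt_mul_sub_sub_iff hlu).mpr hus⟩
  · rintro (⟨hu, hl⟩ | ⟨hu, hl⟩)
    · have hus : u < s := by
        by_contra! hsu
        exact hu.not_ge (mul_nonneg (by linarith) (by linarith))
      have hru : r < u := sub_pos.mp (pos_of_mul_neg_left hu (by linarith))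
      have hlr : l ≤ r := sub_nonpos.mp (nonpos_of_mul_nonneg_left hl (by linarith))
      exact ⟨hlr, hru.le, hus⟩
    · rcases mul_eq_zero.mp hu with hur | hus
      · obtain rfl : u = r := sub_eq_zero.mp hur
        exact ⟨hlu.le, le_rfl, (sq_sub_lt_mul_sub_sub_iff hlu).mp hl⟩
      · obtain rfl : u = s := sub_eq_zero.mp hus
        rw [mul_comm, sq_sub_lt_mul_sub_sub_iff hlu] at hl
        exact absurd hl hrs.not_gt

theorem lt_and_le_and_le_iff_mul_sub_sub (hlu : l < u) (hrs : r ≤ s) :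
    r < l ∧ l ≤ s ∧ s ≤ u ↔
      ((l - r) * (l - s) < 0 ∧ 0 ≤ (u - r) * (u - s)) ∨
      ((l - r) * (l - s) = 0 ∧ (u - l) ^ 2 < (u - r) * (u - s)) := by
  have reflected := le_and_le_and_lt_iff_mul_sub_sub (neg_lt_neg hlu) (neg_le_neg hrs)
  have reflect_mul (x : K) : (-x - -s) * (-x - -r) = (x - r) * (x - s) := by ring
  rw [reflect_mul, reflect_mul, neg_sub_neg, neg_le_neg_iff, neg_le_neg_iff, neg_lt_neg_iff]
    at reflected
  rw [← reflected]
  tauto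

theorem quadratic_one_root_in_Icc_general (hD : 0 ≤ a ^ 2 - 4 * b → IsSquare (a ^ 2 - 4 * b))
    (hlu : l < u) :
    ((X ^ 2 + C a * X + C b).roots.filter (· ∈ Set.Icc l u)).card = 1 ↔
      (u ^ 2 + a * u + b < 0 ∧ 0 ≤ l ^ 2 + a * l + b) ∨
      (0 ≤ u ^ 2 + a * u + b ∧ l ^ 2 + a * l + b < 0) ∨
      ((u - l) ^ 2 < u ^ 2 + a * u + b ∧ l ^ 2 + a * l + b = 0) ∨
      (u ^ 2 + a * u + b = 0 ∧ (u - l) ^ 2 < l ^ 2 + a * l + b) := by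
  rcases lt_or_ge (a ^ 2 - 4 * b) 0 with hneg | hnonneg
  · have hl := quadratic_pos_of_discrim_neg hneg l
    have hu := quadratic_pos_of_discrim_neg hneg u
    simp [roots_quadratic_eq_zero_of_discrim_neg hneg, hl.ne', hu.ne', hl.not_gt, hu.not_gt]
  · obtain ⟨r, s, hrs, rfl, rfl⟩ := exists_le_eq_neg_add_eq_mul_of_isSquare (hD hnonneg)
    have factor (x : K) : x ^ 2 + -(r + s) * x + r * s = (x - r) * (x - s) := by ring
    rw [roots_monic_quadratic_eq_pair, card_filter_pair_eq_one_iff, xor_mem_Icc_iff_of_le hrs,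
      le_and_le_and_lt_iff_mul_sub_sub hlu hrs, lt_and_le_and_le_iff_mul_sub_sub hlu hrs,
      factor, factor]
    tauto

end OrderedField

/-- For a real quadratic `q(x) = x² + a x + b` with `a² - 4b ≥ 0`, `q` has exactly one
root (with multiplicity) in `[-1, 1]` iff `(q(1) < 0 ∧ q(-1) ≥ 0) ∨ (q(1) ≥ 0 ∧ q(-1) < 0)
∨ (q(1) > 4 ∧ q(-1) = 0) ∨ (q(1) = 0 ∧ q(-1) > 4)`. -/
theorem quadratic_one_root_in_Icc (a b : ℝ) (hD : a^2 - 4*b ≥ 0) :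
    Multiset.card (((X^2 + C a * X + C b : ℝ[X]).roots).filter
        (fun x => x ∈ Set.Icc (-1 : ℝ) 1)) = 1 ↔
      (((X^2 + C a * X + C b : ℝ[X]).eval 1 < 0 ∧
          (X^2 + C a * X + C b : ℝ[X]).eval (-1) ≥ 0) ∨
       ((X^2 + C a * X + C b : ℝ[X]).eval 1 ≥ 0 ∧
          (X^2 + C a * X + C b : ℝ[X]).eval (-1) < 0) ∨
       ((X^2 + C a * X + C b : ℝ[X]).eval 1 > 4 ∧
          (X^2 + C a * X + C b : ℝ[X]).eval (-1) = 0) ∨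
       ((X^2 + C a * X + C b : ℝ[X]).eval 1 = 0 ∧
          (X^2 + C a * X + C b : ℝ[X]).eval (-1) > 4)) := by
  have length_sq : ((1 : ℝ) - -1) ^ 2 = 4 := by norm_num
  simpa only [eval_add, eval_mul, eval_pow, eval_X, eval_C, length_sq] using
    quadratic_one_root_in_Icc_general Real.isSquare_iff.mpr (neg_lt_self one_pos)
end

section
/- (Lagrange top) Let a, b, α, β be real numbers with β > 0 and b ≠ ±a, and let f(u) = (1 − u²)(α − βu) − (b − au)², a cubic with leading coefficient β. Assume f has three real roots counted with multiplicity, and that |b² − α| ≤ β. Then f has exactly 2 roots, counted with multiplicity, in the closed interval [−1, 1]. -/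
open Polynomial

/-!
Dividing by `β`, the signs of `f` at `1` and `-1` and its value at `0` say that the three roots
satisfy `∏ (1 - rᵢ) < 0`, `∏ (1 + rᵢ) ≥ 0` and `∏ rᵢ ≤ 1`. By the first inequality some root `r`
exceeds `1`. Removing the factors that come from `r`, the other two roots `s`, `t` satisfy
`(1 - s) * (1 - t) ≥ 0`, `(1 + s) * (1 + t) ≥ 0` and `s * t ≤ 1`: they lie on the same side of `1`
and on the same side of `-1`, and the bound on their product excludes both outer regions.
-/

lemma eval_neg_eq_prod_roots {R : Type*} [CommRing R] [IsDomain R] {p : R[X]} (hp : p.Splits)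
    (x : R) :
    p.eval (-x) = (-1) ^ p.natDegree * p.leadingCoeff * (p.roots.map (x + ·)).prod := by
  have prod_neg : (p.roots.map (-x - ·)).prod =
      (-1) ^ p.natDegree * (p.roots.map (x + ·)).prod := by
    simpa only [Multiset.map_map, Function.comp_def, neg_add', Multiset.card_map,
      ← hp.natDegree_eq_card_roots] using (p.roots.map (x + ·)).prod_map_neg
  rw [hp.eval_eq_prod_roots, prod_neg]
  ring

section OrderedRing

variable {R : Type*} [CommRing R] [LinearOrder R] [IsStrictOrderedRing R]

lemma le_one_of_mul_le_one_of_one_sub_mul_nonneg {s t : R} (hst : s * t ≤ 1)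
    (h : 0 ≤ (1 - s) * (1 - t)) : s ≤ 1 := by
  by_contra! hs
  have ht : 1 ≤ t := sub_nonpos.1 (nonpos_of_mul_nonneg_right h (sub_neg.2 hs))
  exact hst.not_gt (one_lt_mul_of_lt_of_le hs ht)

lemma mem_Icc_neg_one_one_of_mul_le_one_s18 {s t : R} (hst : s * t ≤ 1)
    (h_one : 0 ≤ (1 - s) * (1 - t)) (h_neg_one : 0 ≤ (1 + s) * (1 + t)) :
    s ∈ Set.Icc (-1) 1 := by
  refine ⟨neg_le.1 ?_, le_one_of_mul_le_one_of_one_sub_mul_nonneg hst h_one⟩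
  exact le_one_of_mul_le_one_of_one_sub_mul_nonneg (t := -t) (by simpa using hst)
    (by simpa using h_neg_one)

lemma exists_one_lt_of_prod_one_sub_neg {m : Multiset R}
    (h : (m.map (1 - ·)).prod < 0) : ∃ r ∈ m, 1 < r := by
  by_contra! hm
  refine h.not_ge (Multiset.prod_nonneg fun x hx => ?_)
  obtain ⟨r, hr, rfl⟩ := Multiset.mem_map.1 hx
  exact sub_nonneg.2 (hm r hr)

lemma card_filter_mem_Icc_neg_one_one_eq_two {m : Multiset R} (hm : m.card = 3)
    (h_one : (m.map (1 - ·)).prod < 0) (h_neg_one : 0 ≤ (m.map (1 + ·)).prod)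
    (h_zero : m.prod ≤ 1) :
    (m.filter (· ∈ Set.Icc (-1) 1)).card = 2 := by
  obtain ⟨r, hrm, hr⟩ := exists_one_lt_of_prod_one_sub_neg h_one
  obtain ⟨m, rfl⟩ := Multiset.exists_cons_of_mem hrm
  obtain ⟨s, t, rfl⟩ := Multiset.card_eq_two.1 (by simpa using hm)
  simp only [Multiset.insert_eq_cons, Multiset.map_cons, Multiset.map_singleton,
    Multiset.prod_cons, Multiset.prod_singleton] at h_one h_neg_one h_zero
  have hst_one : 0 ≤ (1 - s) * (1 - t) := (pos_of_mul_neg_right h_one (sub_neg.2 hr).le).le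
  have hst_neg_one : 0 ≤ (1 + s) * (1 + t) :=
    nonneg_of_mul_nonneg_right h_neg_one (by linarith)
  have hst : s * t ≤ 1 := by
    by_contra! h
    exact h_zero.not_gt (one_lt_mul_of_lt_of_le hr h.le)
  have hs := mem_Icc_neg_one_one_of_mul_le_one_s18 hst hst_one hst_neg_one
  have ht : t ∈ Set.Icc (-1) 1 := by
    rw [mul_comm] at hst hst_one hst_neg_one
    exact mem_Icc_neg_one_one_of_mul_le_one_s18 hst hst_one hst_neg_one
  have hr_notMem : r ∉ Set.Icc (-1) 1 := fun h => h.2.not_gt hr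
  rw [Multiset.filter_cons_of_neg _ hr_notMem, Multiset.filter_eq_self.2 (by simpa using ⟨hs, ht⟩),
    Multiset.card_pair]

lemma card_roots_filter_mem_Icc_neg_one_one_eq_two {p : R[X]} (hdeg : p.natDegree = 3)
    (hroots : p.roots.card = 3) (hlead : 0 < p.leadingCoeff) (h_one : p.eval 1 < 0)
    (h_neg_one : p.eval (-1) ≤ 0) (h_zero : -p.leadingCoeff ≤ p.coeff 0) :
    (p.roots.filter (· ∈ Set.Icc (-1) 1)).card = 2 := by
  have hp : p.Splits := splits_iff_card_roots.2 (hroots.trans hdeg.symm)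
  have hsign : (-1 : R) ^ 3 = -1 := Odd.neg_one_pow (by decide)
  rw [hp.eval_eq_prod_roots] at h_one
  rw [eval_neg_eq_prod_roots hp, hdeg, hsign] at h_neg_one
  rw [hp.coeff_zero_eq_leadingCoeff_mul_prod_roots, hdeg, hsign] at h_zero
  refine card_filter_mem_Icc_neg_one_one_eq_two hroots ?_ ?_ ?_
  · exact neg_of_mul_neg_right h_one hlead.le
  · exact nonneg_of_mul_nonneg_right (by linarith) hlead
  · exact le_of_mul_le_mul_left (by linarith) hlead

end OrderedRing

/-- The cubic `(1 - u²)(α - βu) - (b - au)²` whose roots are the nutation limits of `cos θ` for the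
Lagrange top, over an arbitrary commutative ring of coefficients. -/
noncomputable def nutationCubic {R : Type*} [CommRing R] (a b α β : R) : R[X] :=
  (1 - X ^ 2) * (C α - C β * X) - (C b - C a * X) ^ 2

namespace nutationCubic

variable {R : Type*} [CommRing R] (a b α β : R)

lemma eq_cubic : nutationCubic a b α β =
    C β * X ^ 3 + C (-(α + a ^ 2)) * X ^ 2 + C (2 * a * b - β) * X + C (α - b ^ 2) := by
  simp only [nutationCubic, map_sub, map_add, map_neg, map_mul, map_pow, map_ofNat]
  ring

variable {β} in
lemma natDegree_eq_three (hβ : β ≠ 0) : (nutationCubic a b α β).natDegree = 3 := by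
  rw [eq_cubic, natDegree_cubic hβ]

variable {β} in
lemma leadingCoeff_eq (hβ : β ≠ 0) : (nutationCubic a b α β).leadingCoeff = β := by
  rw [eq_cubic, leadingCoeff_cubic hβ]

lemma eval_one : (nutationCubic a b α β).eval 1 = -(b - a) ^ 2 := by
  simp [nutationCubic]

lemma eval_neg_one : (nutationCubic a b α β).eval (-1) = -(b + a) ^ 2 := by
  simp [nutationCubic]

lemma coeff_zero : (nutationCubic a b α β).coeff 0 = α - b ^ 2 := by
  simp [coeff_zero_eq_eval_zero, nutationCubic]

end nutationCubic

theorem lagrange_top_two_roots_general {R : Type*} [CommRing R] [LinearOrder R]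
    [IsStrictOrderedRing R] {a b α β : R} (hβ : 0 < β) (hb : b ≠ a)
    (hroots : (nutationCubic a b α β).roots.card = 3) (hc : b ^ 2 - α ≤ β) :
    ((nutationCubic a b α β).roots.filter (· ∈ Set.Icc (-1) 1)).card = 2 := by
  have hlead := nutationCubic.leadingCoeff_eq a b α hβ.ne'
  refine card_roots_filter_mem_Icc_neg_one_one_eq_two
    (nutationCubic.natDegree_eq_three a b α hβ.ne') hroots ?_ ?_ ?_ ?_
  · rwa [hlead]
  · rw [nutationCubic.eval_one]
    exact neg_neg_of_pos (sq_pos_of_ne_zero (sub_ne_zero.2 hb))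
  · rw [nutationCubic.eval_neg_one]
    exact neg_nonpos.2 (sq_nonneg _)
  · rw [hlead, nutationCubic.coeff_zero]
    linarith

/-- (Lagrange top) For `β > 0` and `b ≠ ±a`, if the cubic
`f(u) = (1 - u²)(α - βu) - (b - au)²` has three real roots (with multiplicity) and
`|b² - α| ≤ β`, then `f` has exactly 2 roots (with multiplicity) in `[-1, 1]`. -/
theorem lagrange_top_two_roots (a b α β : ℝ) (hβ : 0 < β)
    (hb : b ≠ a ∧ b ≠ -a)
    (hroots : Multiset.card ((1 - X^2) * (C α - C β * X) - (C b - C a * X)^2 : ℝ[X]).roots = 3)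
    (hc : |b^2 - α| ≤ β) :
    Multiset.card ((((1 - X^2) * (C α - C β * X) - (C b - C a * X)^2 : ℝ[X]).roots).filter
        (fun x => x ∈ Set.Icc (-1 : ℝ) 1)) = 2 :=
  lagrange_top_two_roots_general hβ hb.1 hroots (le_of_abs_le hc)
end
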